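/- Let X ⊂ P^n be a non-singular quartic hypersurface with n ≥ 6. Then every geometrically integral component Φ ⊆ F_2(X) of the Fano variety of planes such that X = D(Φ) (i.e. X is swept out by the planes parametrised by Φ) satisfies dim Φ ≤ 3 if n = 6, and dim Φ ≤ 3n − 16 if n ≥ 7. -/

import Mathlib

noncomputable section

abbrev KK : Type := AlgebraicClosure ℚ

abbrev Pn (N : ℕ) := Projectivization KK (Fin (N + 1) → KK)

/-- The common zero set in projective space of a family of polynomials
(membership tested on the chosen representative). -/
def projZeros {N : ℕ} (S : Set (MvPolynomial (Fin (N + 1)) KK)) : Set (Pn N) :=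
  {x | ∀ f ∈ S, MvPolynomial.eval x.rep f = 0}

/-- Zariski-closed subsets of projective space: common zero sets of families of forms. -/
def ProjClosed {N : ℕ} (V : Set (Pn N)) : Prop :=
  ∃ S : Set (MvPolynomial (Fin (N + 1)) KK),
    (∀ f ∈ S, ∃ d, f.IsHomogeneous d) ∧ V = projZeros S

def ProjIrred {N : ℕ} (V : Set (Pn N)) : Prop :=
  V.Nonempty ∧ ∀ C₁ C₂ : Set (Pn N), ProjClosed C₁ → ProjClosed C₂ →
    V ⊆ C₁ ∪ C₂ → V ⊆ C₁ ∨ V ⊆ C₂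

/-- A (geometrically integral) projective variety: an irreducible Zariski-closed set. -/
def ProjVariety {N : ℕ} (V : Set (Pn N)) : Prop := ProjClosed V ∧ ProjIrred V

/-- Dimension of a subset of projective space: Krull dimension of the poset of
irreducible closed subsets contained in it. The empty set has dimension `⊥`. -/
def projDim {N : ℕ} (V : Set (Pn N)) : WithBot ENat :=
  Order.krullDim {W : Set (Pn N) // ProjVariety W ∧ W ⊆ V}

/-- The set of projective points lying on a linear subspace. -/
def planeSet {N : ℕ} (W : Submodule KK (Fin (N + 1) → KK)) : Set (Pn N) :=
  {x | x.rep ∈ W}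

/-- Degree of a subset of projective space: the largest (finite) number of points
in a linear section. -/
def projDeg {N : ℕ} (V : Set (Pn N)) : ℕ :=
  sSup {k : ℕ | ∃ W : Submodule KK (Fin (N + 1) → KK),
    (V ∩ planeSet W).Finite ∧ (V ∩ planeSet W).ncard = k}

/-- The hypersurface cut out by a form. -/
def hyp {n : ℕ} (F : MvPolynomial (Fin (n + 1)) KK) : Set (Pn n) :=
  {x | MvPolynomial.eval x.rep F = 0}

/-- A form over the algebraic closure is non-singular if its partial derivatives
have no common non-trivial zero. -/
def NonsingularK {n : ℕ} (F : MvPolynomial (Fin (n + 1)) KK) : Prop :=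
  ∀ z : Fin (n + 1) → KK,
    (∀ i, MvPolynomial.eval z (MvPolynomial.pderiv i F) = 0) → z = 0

/-- The Fano set of (projective) m-planes contained in X, as linear subspaces of
dimension m+1. -/
def Fano (m n : ℕ) (X : Set (Pn n)) : Set (Submodule KK (Fin (n + 1) → KK)) :=
  {W | Module.finrank KK W = m + 1 ∧ planeSet W ⊆ X}

/-- Closed subsets of the Grassmannian of m-planes in Pⁿ, described via Stiefel
coordinates: Z is closed iff the set of (m+1)-tuples of vectors which, when
linearly independent, span a member of Z, is Zariski-closed in affine space. -/
def GrClosed (m n : ℕ) (Z : Set (Submodule KK (Fin (n + 1) → KK))) : Prop :=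
  (∀ W ∈ Z, Module.finrank KK W = m + 1) ∧
  ∃ S : Set (MvPolynomial (Fin (m + 1) × Fin (n + 1)) KK),
    {v : Fin (m + 1) → Fin (n + 1) → KK |
      LinearIndependent KK v → Submodule.span KK (Set.range v) ∈ Z}
    = {v | ∀ f ∈ S, MvPolynomial.eval (fun p => v p.1 p.2) f = 0}

def GrIrred (m n : ℕ) (Z : Set (Submodule KK (Fin (n + 1) → KK))) : Prop :=
  Z.Nonempty ∧ ∀ C₁ C₂ : Set (Submodule KK (Fin (n + 1) → KK)),
    GrClosed m n C₁ → GrClosed m n C₂ → Z ⊆ C₁ ∪ C₂ → Z ⊆ C₁ ∨ Z ⊆ C₂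

/-- A (geometrically integral) subvariety of the Grassmannian. -/
def GrVariety (m n : ℕ) (Z : Set (Submodule KK (Fin (n + 1) → KK))) : Prop :=
  GrClosed m n Z ∧ GrIrred m n Z

/-- Dimension of a subset of the Grassmannian of m-planes in Pⁿ. -/
def grDim (m n : ℕ) (Z : Set (Submodule KK (Fin (n + 1) → KK))) : WithBot ENat :=
  Order.krullDim {W : Set (Submodule KK (Fin (n + 1) → KK)) // GrVariety m n W ∧ W ⊆ Z}

/-- D(Z): the union of the planes parametrised by Z. -/
def DSet {n : ℕ} (Z : Set (Submodule KK (Fin (n + 1) → KK))) : Set (Pn n) :=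
  {x | ∃ Λ ∈ Z, x.rep ∈ Λ}

/-- A primitive integer vector: the gcd of its coordinates is 1. -/
def IsPrimitiveVec {n : ℕ} (x : Fin n → ℤ) : Prop := Finset.univ.gcd x = 1

/-- Height of an integer vector: the maximum modulus of its coordinates. -/
def heightVec {n : ℕ} (x : Fin n → ℤ) : ℝ :=
  ((Finset.univ.sup fun i => (x i).natAbs : ℕ) : ℝ)

def coeK {n : ℕ} (x : Fin n → ℤ) : Fin n → KK := fun i => ((x i : ℤ) : KK)

def coeQ {n : ℕ} (x : Fin n → ℤ) : Fin n → ℚ := fun i => ((x i : ℤ) : ℚ)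

/-- The number of rational points of height at most B on a subset V of projective
space, counted via primitive integer vectors (each projective rational point
corresponds to exactly two primitive vectors). -/
def NV {n : ℕ} (V : Set (Pn n)) (B : ℝ) : ℕ :=
  Set.ncard {x : Fin (n + 1) → ℤ | IsPrimitiveVec x ∧ heightVec x ≤ B ∧
    ∃ h : coeK x ≠ 0, Projectivization.mk KK (coeK x) h ∈ V}

/-- An integer form is non-singular if its partial derivatives have no common
non-trivial zero over the algebraic closure of ℚ. -/
def NonsingularZ {n : ℕ} (F : MvPolynomial (Fin (n + 1)) ℤ) : Prop :=
  ∀ z : Fin (n + 1) → KK,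
    (∀ i, MvPolynomial.aeval z (MvPolynomial.pderiv i F) = 0) → z = 0

/-- Base change of an integer polynomial to the algebraic closure of ℚ. -/
def mapK {n : ℕ} (F : MvPolynomial (Fin (n + 1)) ℤ) : MvPolynomial (Fin (n + 1)) KK :=
  MvPolynomial.map (Int.castRingHom KK) F

/-- The Plücker height of the rational m-plane spanned by the integer vectors v:
the maximum modulus of the (m+1)×(m+1) minors, divided by their gcd. -/
def pluckerHeight {m n : ℕ} (v : Fin (m + 1) → Fin (n + 1) → ℤ) : ℕ :=
  (Finset.univ.sup fun s : Fin (m + 1) → Fin (n + 1) =>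
    (Matrix.det (Matrix.of fun i j => v i (s j))).natAbs) /
  (Finset.univ.gcd fun s : Fin (m + 1) → Fin (n + 1) =>
    (Matrix.det (Matrix.of fun i j => v i (s j))).natAbs)

def betaExp (k : ℕ) : ℝ := if k ≤ 3 then 0 else 1/4

def sigmaExp (n k : ℕ) : ℝ :=
  if (k : ℝ) ≤ ((n : ℝ) - 1) / 2 then (k : ℝ) + 1 else (k : ℝ) + betaExp k

def tauExp (n k : ℕ) : ℝ :=
  if (k : ℝ) < ((n : ℝ) - 1) / 2 then (k : ℝ) + 1 else (k : ℝ) + betaExp k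

/-- E: the union of the (n-1)/2-planes contained in X (for n odd; empty for n even). -/
def bigE {n : ℕ} (X : Set (Pn n)) : Set (Pn n) :=
  {x | n % 2 = 1 ∧ ∃ W : Submodule KK (Fin (n + 1) → KK),
    Module.finrank KK W = (n - 1) / 2 + 1 ∧ planeSet W ⊆ X ∧ x ∈ planeSet W}

/-- The cone of lines contained in X passing through x. -/
def coneOfLines {n : ℕ} (X : Set (Pn n)) (x : Pn n) : Set (Pn n) :=
  {y | ∃ L : Submodule KK (Fin (n + 1) → KK),
    Module.finrank KK L = 2 ∧ planeSet L ⊆ X ∧ x.rep ∈ L ∧ y.rep ∈ L}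


section helpers
open MvPolynomial


lemma finrank_hom (L : Type) [Field L] (k : ℕ) :
    Module.finrank L (homogeneousSubmodule (Fin 3) L k) = (k + 2).choose 2 := by
  classical
  let T := {e : Fin 3 →₀ ℕ // e.degree = k}
  let e : Sym (Fin 3) k ≃ T := (Sym.equivNatSum (Fin 3) k).trans
    (Equiv.subtypeEquivRight (fun P => Iff.rfl))
  letI : Fintype T := Fintype.ofEquiv _ e
  have h1 : homogeneousSubmodule (Fin 3) L k =
      Submodule.span L (Set.range (fun e : T => (monomial e.1 1 : MvPolynomial (Fin 3) L))) := by
    rw [homogeneousSubmodule_eq_finsupp_supported, AddMonoidAlgebra.supported_eq_span_single,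
      Set.image_eq_range]
    rfl
  rw [h1, finrank_span_eq_card]
  · rw [← Fintype.card_congr e, Sym.card_sym_eq_choose, Fintype.card_fin]
    rw [show 3 + k - 1 = k + 2 by omega, Nat.choose_symm_add]
  · have := (basisMonomials (Fin 3) L).linearIndependent
    rw [coe_basisMonomials] at this
    exact this.comp (fun e : T => e.1) Subtype.val_injective

instance (L : Type) [Field L] (k : ℕ) : FiniteDimensional L (homogeneousSubmodule (Fin 3) L k) :=
  Module.Finite.iff_fg.2 (homogeneousSubmodule_fg _ _ k)

lemma hom_lift {L J : Type} [Field L] [Fintype J] (g : J → MvPolynomial (Fin 3) L)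
    (hg : ∀ j, (g j).IsHomogeneous 3) (d : ℕ) (h : MvPolynomial (Fin 3) L)
    (hh : h.IsHomogeneous (d + 3)) (hI : h ∈ Ideal.span (Set.range g)) :
    ∃ A : J → MvPolynomial (Fin 3) L, (∀ j, (A j).IsHomogeneous d) ∧ h = ∑ j, A j * g j := by
  obtain ⟨A, hA⟩ := Ideal.mem_span_range_iff_exists_fun.1 hI
  refine ⟨fun j => homogeneousComponent d (A j), fun j => homogeneousComponent_isHomogeneous _ _, ?_⟩
  have key : ∀ j, homogeneousComponent (d + 3) (A j * g j) = homogeneousComponent d (A j) * g j := by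
    intro j
    conv_lhs => rw [← sum_homogeneousComponent (A j), Finset.sum_mul, map_sum]
    have : ∀ i, homogeneousComponent (d + 3) (homogeneousComponent i (A j) * g j) =
        if i = d then homogeneousComponent d (A j) * g j else 0 := by
      intro i
      rw [homogeneousComponent_of_mem ((homogeneousComponent_isHomogeneous i (A j)).mul (hg j))]
      by_cases hi : i = d
      · subst hi; simp
      · rw [if_neg hi, if_neg (by omega)]
    simp only [this, Finset.sum_ite_eq', Finset.mem_range]
    split_ifs with h
    · rfl
    · rw [homogeneousComponent_eq_zero _ _ (by omega), zero_mul]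
  rw [← Finset.sum_congr rfl (fun j _ => key j), ← map_sum, hA, homogeneousComponent_of_mem hh, if_pos rfl]

/-- The syzygy map. -/
noncomputable def Psi {L J : Type} [Field L] [Fintype J] (g : J → MvPolynomial (Fin 3) L) :
    (Fin 3 → J → L) →ₗ[L] MvPolynomial (Fin 3) L where
  toFun w := ∑ j, (∑ a, w a j • X a) * g j
  map_add' w w' := by simp [add_smul, Finset.sum_add_distrib, add_mul]
  map_smul' c w := by simp [mul_smul, Finset.smul_sum, Finset.sum_mul]

lemma ptne {L J : Type} [Field L] [Fintype J] (g : J → MvPolynomial (Fin 3) L)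
    (hrad : ∀ a, ∃ N, (X a : MvPolynomial (Fin 3) L) ^ N ∈ Ideal.span (Set.range g)) :
    ∃ j, eval ![0, 0, 1] (g j) ≠ 0 := by
  by_contra! h
  obtain ⟨N, hN⟩ := hrad 2
  obtain ⟨A, hA⟩ := Ideal.mem_span_range_iff_exists_fun.1 hN
  have := congrArg (eval ![(0 : L), 0, 1]) hA
  simp [h] at this

lemma deg_mem {L J : Type} [Field L] [Fintype J] (g : J → MvPolynomial (Fin 3) L)
    (hrad : ∀ a, ∃ N, (X a : MvPolynomial (Fin 3) L) ^ N ∈ Ideal.span (Set.range g)) :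
    ∃ e : ℕ, ∀ h : MvPolynomial (Fin 3) L, h.IsHomogeneous (e + 4) → h ∈ Ideal.span (Set.range g) := by
  choose N hN using hrad
  refine ⟨∑ a, N a, fun h hh => ?_⟩
  rw [h.as_sum]
  refine Ideal.sum_mem _ fun d hd => ?_
  have hdeg : d.degree = ∑ a, N a + 4 := by
    rw [Finsupp.degree_eq_weight_one]
    exact hh (mem_support_iff.1 hd)
  have : ∃ a, N a ≤ d a := by
    by_contra! hcon
    have : d.degree ≤ ∑ a, N a := by
      rw [Finsupp.degree_eq_sum]; exact Finset.sum_le_sum fun a _ => (hcon a).le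
    omega
  obtain ⟨a, ha⟩ := this
  have hle : Finsupp.single a (N a) ≤ d := by simpa using ha
  obtain ⟨d', rfl⟩ := exists_add_of_le hle
  have : monomial (Finsupp.single a (N a) + d') (coeff (Finsupp.single a (N a) + d') h)
     = X a ^ N a * monomial d' (coeff (Finsupp.single a (N a) + d') h) := by
    rw [X_pow_eq_monomial, monomial_mul, one_mul]
  rw [this]
  exact Ideal.mul_mem_right _ _ (hN a)

lemma arith_aux (r z x1 x2 x3 e : ℕ) (hr : r ≤ 3) (h1 : r * x1 ≤ z) (h2 : x3 + z = (r + 1) * x2)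
    (a1 : 2 * x1 = (e + 2) * (e + 1)) (a2 : 2 * x2 = (e + 1 + 2) * (e + 1 + 1))
    (a3 : 2 * x3 = (e + 4 + 2) * (e + 4 + 1)) : False := by
  interval_cases r <;> nlinarith

lemma card_ge_five {L J : Type} [Field L] [Fintype J] (f : J → MvPolynomial (Fin 3) L)
    (hf : ∀ j, (f j).IsHomogeneous 3)
    (hrad : ∀ a, ∃ N, (X a : MvPolynomial (Fin 3) L) ^ N ∈ Ideal.span (Set.range f))
    (hspan : ∀ c : J → L, ∑ j, c j * eval ![0, 0, 1] (f j) = 0 →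
      ∃ w : Fin 3 → J → L, Psi f w = 0 ∧ w 2 = c) : 5 ≤ Fintype.card J := by
  classical
  by_contra! hcard
  obtain ⟨j0, hj0⟩ := ptne f hrad
  obtain ⟨e, he⟩ := deg_mem f hrad
  -- the functional
  let γ : (J → L) →ₗ[L] L := ∑ j, (eval ![0, 0, 1] (f j)) • LinearMap.proj j
  have hγ : ∀ c, γ c = ∑ j, c j * eval ![0, 0, 1] (f j) := by
    intro c; simp [γ, mul_comm]
  have hγs : Function.Surjective γ := by
    apply LinearMap.surjective
    intro h0
    have := congrArg (fun q => q (Pi.single j0 1)) h0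
    simp [hγ, Pi.single_apply] at this
    exact hj0 this
  have hker : Module.finrank L (LinearMap.ker γ) + 1 = Fintype.card J := by
    have := LinearMap.finrank_range_add_finrank_ker γ
    rw [LinearMap.range_eq_top.2 hγs] at this
    simp at this
    omega
  set r := Module.finrank L (LinearMap.ker γ) with hr
  let κ := Module.finBasis L (LinearMap.ker γ)
  have hκ : ∀ i : Fin r, ∃ w : Fin 3 → J → L, Psi f w = 0 ∧ w 2 = (κ i : J → L) := by
    intro i
    apply hspan
    rw [← hγ]
    exact (κ i).2
  choose w hw hw2 using hκ
  let W : Matrix (Fin r) J (MvPolynomial (Fin 3) L) := fun i j => ∑ a, w i a j • X a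
  have hWhom : ∀ i j, (W i j).IsHomogeneous 1 := by
    intro i j
    apply IsHomogeneous.sum
    intro a _
    rw [smul_eq_C_mul]
    exact (isHomogeneous_X _ a).C_mul _
  have hWp : ∀ i j, eval ![0, 0, 1] (W i j) = (κ i : J → L) j := by
    intro i j
    rw [← hw2]
    simp [W, Fin.sum_univ_three, smul_eval]
  -- left inverse
  have hLI : LinearIndependent L (fun i => (κ i : J → L)) :=
    κ.linearIndependent.map' (LinearMap.ker γ).subtype (Submodule.ker_subtype _)
  obtain ⟨q, hq⟩ : ∃ q : (J → L) →ₗ[L] (Fin r → L), ∀ i, q (κ i) = Pi.single i 1 := by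
    obtain ⟨q, hq⟩ := LinearMap.exists_leftInverse_of_injective (Fintype.linearCombination L (fun i => (κ i : J → L)))
      (by
        rw [LinearMap.ker_eq_bot]
        exact hLI.fintypeLinearCombination_injective)
    refine ⟨q, fun i => ?_⟩
    have := congrArg (fun z => z (Pi.single i 1)) hq
    simpa [Fintype.linearCombination_apply_single] using this
  let Qm : Matrix J (Fin r) (MvPolynomial (Fin 3) L) := fun j i => C (q (Pi.single j 1) i)
  have hdet : (W * Qm).det ≠ 0 := by
    intro h0
    have := congrArg (eval ![(0 : L), 0, 1]) h0
    rw [RingHom.map_det, map_zero] at this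
    have h1 : (eval ![(0 : L), 0, 1]).mapMatrix (W * Qm) = 1 := by
      ext i k
      have hQ : ∀ j i, eval ![(0 : L), 0, 1] (Qm j i) = q (Pi.single j 1) i := fun j i => eval_C _
      rw [RingHom.mapMatrix_apply, Matrix.map_apply, Matrix.mul_apply, map_sum]
      simp only [map_mul, hWp, hQ]
      have := congrFun (hq i) k
      rw [← (LinearMap.pi_apply_eq_sum_univ q (κ i : J → L)).symm] at this
      rw [Finset.sum_apply] at this
      simp only [Pi.smul_apply, smul_eq_mul] at this
      convert this using 1
      · refine Finset.sum_congr rfl fun j _ => ?_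
        have hs : (Pi.single j 1 : J → L) = fun j' => if j = j' then 1 else 0 := by
          ext j'; simp [Pi.single_apply, eq_comm]
        rw [hs]
      · simp [Matrix.one_apply, Pi.single_apply, eq_comm]
    rw [h1] at this
    simp at this
  let S := fun k => homogeneousSubmodule (Fin 3) L k
  let φ : (Fin r → S e) →ₗ[L] (J → S (e + 1)) := LinearMap.pi fun j =>
    LinearMap.codRestrict (S (e + 1))
      (∑ i, ((LinearMap.mulRight L (W i j)).comp (S e).subtype).comp (LinearMap.proj i))
      (by
        intro b
        simp only [LinearMap.sum_apply]
        refine Submodule.sum_mem _ fun i _ => ?_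
        exact IsHomogeneous.mul (b i).2 (hWhom i j))
  have hφ : ∀ b j, ((φ b j : S (e + 1)) : MvPolynomial (Fin 3) L) = ∑ i, (b i : MvPolynomial (Fin 3) L) * W i j := by
    intro b j
    simp [φ]
  let ψ : (J → S (e + 1)) →ₗ[L] S (e + 4) :=
    LinearMap.codRestrict (S (e + 4))
      (∑ j, ((LinearMap.mulRight L (f j)).comp (S (e + 1)).subtype).comp (LinearMap.proj j))
      (by
        intro b
        simp only [LinearMap.sum_apply]
        refine Submodule.sum_mem _ fun i _ => ?_
        exact (IsHomogeneous.mul (b i).2 (hf i) : IsHomogeneous _ (e + 1 + 3)))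
  have hψ : ∀ b, ((ψ b : S (e + 4)) : MvPolynomial (Fin 3) L) = ∑ j, (b j : MvPolynomial (Fin 3) L) * f j := by
    intro b
    simp [ψ]
  have hφinj : Function.Injective φ := by
    rw [injective_iff_map_eq_zero]
    intro b hb
    have h1 : (fun i => (b i : MvPolynomial (Fin 3) L)) = 0 := by
      apply Matrix.eq_zero_of_vecMul_eq_zero hdet
      rw [← Matrix.vecMul_vecMul]
      have : Matrix.vecMul (fun i => (b i : MvPolynomial (Fin 3) L)) W = 0 := by
        ext1 j
        have := hφ b j
        rw [hb] at this
        simpa [Matrix.vecMul, dotProduct] using this.symm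
      rw [this, Matrix.zero_vecMul]
    ext1 i
    exact Subtype.ext (congrFun h1 i)
  have hψs : Function.Surjective ψ := by
    intro h
    obtain ⟨A, hA, hA'⟩ := hom_lift f hf (e + 1) h h.2 (he h h.2)
    refine ⟨fun j => ⟨A j, hA j⟩, Subtype.ext ?_⟩
    rw [hψ, hA']
  have hcomp : LinearMap.range φ ≤ LinearMap.ker ψ := by
    rintro _ ⟨b, rfl⟩
    rw [LinearMap.mem_ker]
    apply Subtype.ext
    rw [hψ]
    simp only [hφ, Finset.sum_mul]
    rw [Finset.sum_comm]
    refine Finset.sum_eq_zero fun i _ => ?_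
    have := hw i
    simp only [Psi, LinearMap.coe_mk, AddHom.coe_mk] at this
    simp only [mul_assoc, ← Finset.mul_sum]
    rw [show ∑ j, W i j * f j = 0 from this, mul_zero]
  have h1 := Submodule.finrank_mono hcomp
  rw [LinearMap.finrank_range_of_inj hφinj] at h1
  have h2 := LinearMap.finrank_range_add_finrank_ker ψ
  rw [LinearMap.range_eq_top.2 hψs, finrank_top] at h2
  rw [Module.finrank_pi_fintype] at h1 h2
  simp only [S, finrank_hom, Finset.sum_const, Finset.card_univ, Fintype.card_fin, smul_eq_mul] at h1 h2
  rw [← hker] at h2 hcard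
  have hs : ∀ k : ℕ, 2 * (k + 2).choose 2 = (k + 2) * (k + 1) := by
    intro k
    rw [Nat.choose_two_right, Nat.mul_div_cancel' (Nat.even_mul_pred_self _).two_dvd]
    rfl
  have a1 := hs e
  have a2 := hs (e + 1)
  have a3 := hs (e + 4)
  exact arith_aux r _ _ _ _ e (by omega) h1 h2 a1 a2 a3


lemma exists_derivation {K L ι : Type} [Field K] [Field L] [CharZero K] [Algebra K L]
    [Algebra.EssFiniteType K L] [DecidableEq ι] (y : ι → L) (hy : AlgebraicIndependent K y) (a : ι) :
    ∃ D : Derivation K L L, ∀ b, D (y b) = if b = a then 1 else 0 := by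
  let B := MvPolynomial ι K
  letI algBL : Algebra B L := (aeval (R := K) y).toRingHom.toAlgebra
  have hBL : ∀ b : B, algebraMap B L b = aeval y b := fun _ => rfl
  haveI : IsScalarTower K B L := IsScalarTower.of_algebraMap_eq (fun x => by
    rw [hBL]; simp [B])
  haveI : FaithfulSMul B L := by
    rw [faithfulSMul_iff_algebraMap_injective]; exact hy
  let Q := FractionRing B
  letI : Algebra Q L := FractionRing.liftAlgebra B L
  haveI : IsScalarTower B Q L := inferInstance
  haveI : IsScalarTower K Q L := IsScalarTower.of_algebraMap_eq (fun x => by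
    rw [IsScalarTower.algebraMap_apply K B Q, ← IsScalarTower.algebraMap_apply B Q L,
     ← IsScalarTower.algebraMap_apply K B L])
  haveI : CharZero Q := charZero_of_injective_algebraMap (algebraMap K Q).injective
  haveI : Algebra.EssFiniteType Q L := Algebra.EssFiniteType.of_comp K Q L
  haveI : Algebra.FormallySmooth Q L := inferInstance
  haveI : Algebra.FormallySmooth B Q := .of_isLocalization (nonZeroDivisors B)
  haveI : Algebra.FormallySmooth B L := .comp B Q L
  let φ : B →ₐ[K] TrivSqZeroExt L L := aeval (fun b => TrivSqZeroExt.inl (y b) + TrivSqZeroExt.inr (if b = a then 1 else 0))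
  have hφX : ∀ b, φ (X b) = TrivSqZeroExt.inl (y b) + TrivSqZeroExt.inr (if b = a then 1 else 0) :=
    fun b => aeval_X _ _
  letI algBE : Algebra B (TrivSqZeroExt L L) := φ.toRingHom.toAlgebra
  have hBE : ∀ b : B, algebraMap B (TrivSqZeroExt L L) b = φ b := fun _ => rfl
  let g : TrivSqZeroExt L L →ₐ[B] L :=
    { (TrivSqZeroExt.fstHom K L L : TrivSqZeroExt L L →ₐ[K] L).toRingHom with
      commutes' := by
        intro b
        have : ((TrivSqZeroExt.fstHom K L L).comp φ) = aeval y := by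
          ext b; simp only [φ, AlgHom.comp_apply, aeval_X]; simp [-DualNumber.inr_eq_smul_eps]
        exact DFunLike.congr_fun this b }
  have hg : Function.Surjective g := fun x => ⟨TrivSqZeroExt.inl x, rfl⟩
  have hgn : IsNilpotent (RingHom.ker (g : TrivSqZeroExt L L →+* L)) := by
    refine ⟨2, (pow_two (RingHom.ker (g : TrivSqZeroExt L L →+* L))).trans ?_⟩
    rw [Submodule.zero_eq_bot, ← le_bot_iff, Ideal.mul_le]
    intro r hr s hs
    have hr : r.fst = 0 := hr
    have hs : s.fst = 0 := hs
    rw [Ideal.mem_bot]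
    ext
    · simp [hr]
    · simp [hr, hs]
  let f : L →ₐ[B] TrivSqZeroExt L L := Algebra.FormallySmooth.liftOfSurjective (AlgHom.id B L) g hg hgn
  have hf : ∀ x, (f x).fst = x := fun x =>
    Algebra.FormallySmooth.liftOfSurjective_apply (AlgHom.id B L) g hg hgn x
  have hfK : ∀ k : K, f (algebraMap K L k) = TrivSqZeroExt.inl (algebraMap K L k) := by
    intro k
    rw [IsScalarTower.algebraMap_apply K B L, f.commutes, hBE, AlgHom.commutes φ]
    rw [← IsScalarTower.algebraMap_apply K B L]
    rfl
  refine ⟨Derivation.mk' { toFun := fun x => (f x).snd, map_add' := by intros; simp, map_smul' := ?_ } ?_, ?_⟩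
  · intro k x
    rw [Algebra.smul_def, map_mul, hfK]
    simp [Algebra.smul_def]
  · intro x z
    simp [hf, mul_comm]
  · intro b
    have : f (y b) = φ (X b) := by
      rw [← hBE, ← f.commutes, hBL]; simp
    change (f (y b)).snd = _
    rw [this, hφX]; simp only [TrivSqZeroExt.snd_add, TrivSqZeroExt.snd_inl, TrivSqZeroExt.snd_inr, zero_add]

lemma derivation_aeval {K B σ : Type} [Field K] [CommRing B] [Algebra K B] [Fintype σ]
    (D : Derivation K B B) (x : σ → B) (F : MvPolynomial σ K) :
    D (aeval x F) = ∑ j, aeval x (pderiv j F) * D (x j) := by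
  classical
  induction F using MvPolynomial.induction_on with
  | C a => simp
  | add p q hp hq => simp [hp, hq, add_mul, Finset.sum_add_distrib]
  | mul_X p i hp =>
    simp only [map_mul, aeval_X, Derivation.leibniz, hp, pderiv_X, map_add, smul_eq_mul, add_mul,
      Finset.sum_add_distrib, Finset.mul_sum]
    congr 1
    · rw [Finset.sum_eq_single i] <;> simp +contextual [Pi.single_apply, eq_comm]
    · refine Finset.sum_congr rfl fun j _ => by ring


lemma claimA {L J : Type} [Field L] [Fintype J] (g : J → MvPolynomial (Fin 3) L)
    (hg : ∀ j, (g j).IsHomogeneous 3)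
    (hrad : ∀ a, ∃ N, (X a : MvPolynomial (Fin 3) L) ^ N ∈ Ideal.span (Set.range g))
    (hspan : ∀ c : J → L, ∑ j, c j * eval ![0, 0, 1] (g j) = 0 →
      ∃ w : Fin 3 → J → L, Psi g w = 0 ∧ w 2 = c) :
    5 ≤ Module.finrank L (Submodule.span L (Set.range g)) := by
  classical
  set G := Submodule.span L (Set.range g) with hG
  haveI : FiniteDimensional L G := FiniteDimensional.span_of_finite L (Set.finite_range g)
  let b := Module.finBasis L G
  let f : Fin (Module.finrank L G) → MvPolynomial (Fin 3) L := fun i => b i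
  let G' : J → G := fun j => ⟨g j, Submodule.subset_span ⟨j, rfl⟩⟩
  let ρ : J → Fin (Module.finrank L G) → L := fun j => b.repr (G' j)
  have hρ : ∀ j, ∑ i, ρ j i • f i = g j := by
    intro j
    have := congrArg (Subtype.val) (b.sum_repr (G' j))
    rw [AddSubmonoidClass.coe_finset_sum] at this
    exact this
  have hGhom : G ≤ homogeneousSubmodule (Fin 3) L 3 := by
    rw [hG, Submodule.span_le]
    rintro _ ⟨j, rfl⟩
    exact hg j
  have := card_ge_five f (fun i => hGhom (b i).2) ?_ ?_
  · simpa using this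
  · intro a
    obtain ⟨N, hN⟩ := hrad a
    refine ⟨N, ?_⟩
    refine (Ideal.span_le.2 ?_ : Ideal.span (Set.range g) ≤ _) hN
    rintro _ ⟨j, rfl⟩
    rw [← hρ j]
    refine Ideal.sum_mem _ fun i _ => ?_
    rw [smul_eq_C_mul]
    exact Ideal.mul_mem_left _ _ (Ideal.subset_span ⟨i, rfl⟩)
  · intro c hc
    have hm : ∑ i, c i • f i ∈ G := Submodule.sum_mem _ fun i _ => Submodule.smul_mem _ _ (b i).2
    obtain ⟨c', hc'⟩ := (Submodule.mem_span_range_iff_exists_fun L).1 hm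
    obtain ⟨w', hw', hw2⟩ := hspan c' (by
      have := congrArg (eval ![(0 : L), 0, 1]) hc'
      simp only [map_sum, smul_eval] at this
      rw [this, hc])
    refine ⟨fun a i => ∑ j, w' a j * ρ j i, ?_, ?_⟩
    · rw [← hw']
      simp only [Psi, LinearMap.coe_mk, AddHom.coe_mk]
      have : ∀ j, (∑ a, w' a j • X a) * g j = ∑ i, ((∑ a, (w' a j * ρ j i) • X a) * f i) := by
        intro j
        conv_lhs => rw [← hρ j, Finset.mul_sum]
        refine Finset.sum_congr rfl fun i _ => ?_
        rw [mul_smul_comm, ← smul_mul_assoc, Finset.smul_sum]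
        congr 1
        refine Finset.sum_congr rfl fun a _ => ?_
        rw [smul_smul, mul_comm]
      simp only [this]
      rw [Finset.sum_comm]
      refine Finset.sum_congr rfl fun i _ => ?_
      rw [← Finset.sum_mul, Finset.sum_comm]
      simp only [Finset.sum_smul]
    · ext i
      have h1 : ∑ j, c' j • G' j = ∑ i, c i • b i := by
        apply Subtype.ext
        rw [AddSubmonoidClass.coe_finset_sum, AddSubmonoidClass.coe_finset_sum]
        exact hc'
      have h2 := congrArg (fun z => b.repr z i) h1
      simp only [b.repr_sum_self] at h2
      rw [← h2]
      change ∑ j, w' 2 j * ρ j i = _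
      rw [hw2]
      simp [ρ, map_sum, Finsupp.finset_sum_apply]

/-- restriction to the line -/
noncomputable def piL (L : Type) [Field L] : MvPolynomial (Fin 3) L →ₐ[L] Polynomial L :=
  aeval ![0, Polynomial.X, 1]

lemma piL_eval {L : Type} [Field L] (p : MvPolynomial (Fin 3) L) :
    Polynomial.eval 0 (piL L p) = eval ![0, 0, 1] p := by
  have : ((Polynomial.aeval (0 : L)).comp (piL L)) = aeval ![(0 : L), 0, 1] := by
    ext i
    fin_cases i <;> simp [piL]
  have := DFunLike.congr_fun this p
  rw [AlgHom.comp_apply, Polynomial.coe_aeval_eq_eval] at this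
  rw [this]; simp [aeval_eq_eval]

lemma piL_natDegree {L : Type} [Field L] (p : MvPolynomial (Fin 3) L) (k : ℕ) (hp : p.IsHomogeneous k) :
    (piL L p).natDegree ≤ k := by
  rw [p.as_sum, map_sum]
  refine Polynomial.natDegree_sum_le_of_forall_le _ _ fun d hd => ?_
  have hdeg : d.degree = k := by
    rw [Finsupp.degree_eq_weight_one]
    exact hp (mem_support_iff.1 hd)
  have : d 1 ≤ k := by
    rw [← hdeg, Finsupp.degree_eq_sum]
    exact Finset.single_le_sum (fun _ _ => Nat.zero_le _) (Finset.mem_univ 1)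
  rw [piL, aeval_monomial]
  rw [Finsupp.prod_fintype _ _ (by simp), Fin.prod_univ_three]
  refine (Polynomial.natDegree_mul_le).trans ?_
  simp only [Polynomial.algebraMap_eq, Polynomial.natDegree_C, zero_add, Matrix.cons_val_zero, Matrix.cons_val_one, Matrix.cons_val, one_pow, mul_one]
  refine (Polynomial.natDegree_mul_le).trans ?_
  simp only [Polynomial.natDegree_X_pow]
  have : ((0 : Polynomial L) ^ d 0).natDegree = 0 := by
    rcases Nat.eq_zero_or_pos (d 0) with h | h
    · simp [h]
    · simp [zero_pow h.ne']
  omega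

lemma piL_Psi {L J : Type} [Field L] [Fintype J] (g : J → MvPolynomial (Fin 3) L) (w : Fin 3 → J → L) :
    piL L (Psi g w) = ∑ j, (Polynomial.C (w 1 j) * Polynomial.X + Polynomial.C (w 2 j)) * piL L (g j) := by
  simp only [Psi, LinearMap.coe_mk, AddHom.coe_mk, map_sum, map_mul, map_smul]
  refine Finset.sum_congr rfl fun j _ => ?_
  congr 1
  simp [Fin.sum_univ_three, piL, Polynomial.smul_eq_C_mul]

lemma claimB_aux {L J : Type} [Field L] [Fintype J] (g : J → MvPolynomial (Fin 3) L)
    (hspan : ∀ c : J → L, ∑ j, c j * eval ![0, 0, 1] (g j) = 0 →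
      ∃ w : Fin 3 → J → L, Psi g w = 0 ∧ w 2 = c) (h : Polynomial L) (N : ℕ) :
    ∀ A : J → Polynomial L, (∀ j, (A j).natDegree ≤ N + 1) →
      Polynomial.X ^ N * h = ∑ j, A j * piL L (g j) → ∃ w, piL L (Psi g w) = h := by
  induction N with
  | zero =>
    intro A hA h1
    refine ⟨![0, fun j => (A j).coeff 1, fun j => (A j).coeff 0], ?_⟩
    rw [piL_Psi]
    rw [pow_zero, one_mul] at h1
    rw [h1]
    refine Finset.sum_congr rfl fun j _ => ?_
    congr 1
    exact (Polynomial.eq_X_add_C_of_natDegree_le_one (hA j)).symm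
  | succ N ih =>
    intro A hA h1
    obtain ⟨w, hw, hw2⟩ := hspan (fun j => (A j).coeff 0) (by
      have := congrArg (Polynomial.eval 0) h1
      rw [Polynomial.eval_finset_sum] at this
      simp only [Polynomial.eval_mul, piL_eval, Polynomial.eval_pow, Polynomial.eval_X] at this
      rw [zero_pow (Nat.succ_ne_zero N), zero_mul] at this
      simp only [Polynomial.coeff_zero_eq_eval_zero]
      exact this.symm)
    have h2 := piL_Psi g w
    rw [hw, map_zero] at h2
    refine ih (fun j => (A j).divX - Polynomial.C (w 1 j)) ?_ ?_
    · intro j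
      refine (Polynomial.natDegree_sub_C).le.trans ?_
      rw [Polynomial.natDegree_divX_eq_natDegree_tsub_one]
      have := hA j
      omega
    · apply mul_left_cancel₀ (Polynomial.X_ne_zero (R := L))
      rw [← mul_assoc, ← pow_succ', h1, ← sub_zero (∑ j, A j * _), h2, ← Finset.sum_sub_distrib, Finset.mul_sum]
      refine Finset.sum_congr rfl fun j _ => ?_
      rw [← sub_mul, ← mul_assoc]
      congr 1
      conv_lhs => rw [← Polynomial.X_mul_divX_add (A j)]
      rw [hw2]
      ring

lemma claimB {L J : Type} [Field L] [Fintype J] (g : J → MvPolynomial (Fin 3) L)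
    (hg : ∀ j, (g j).IsHomogeneous 3)
    (hrad : ∀ a, ∃ N, (X a : MvPolynomial (Fin 3) L) ^ N ∈ Ideal.span (Set.range g))
    (hspan : ∀ c : J → L, ∑ j, c j * eval ![0, 0, 1] (g j) = 0 →
      ∃ w : Fin 3 → J → L, Psi g w = 0 ∧ w 2 = c) (h : Polynomial L) (hh : h.natDegree ≤ 4) :
    ∃ w, piL L (Psi g w) = h := by
  obtain ⟨N, hN⟩ := hrad 1
  let H : MvPolynomial (Fin 3) L := ∑ i ∈ Finset.range 5, C (h.coeff i) * (X 1 ^ i * X 2 ^ (4 - i))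
  have hH : H.IsHomogeneous 4 := by
    apply IsHomogeneous.sum
    intro i hi
    apply IsHomogeneous.C_mul
    have := ((isHomogeneous_X_pow (R := L) (1 : Fin 3) i).mul (isHomogeneous_X_pow (R := L) (2 : Fin 3) (4 - i)))
    rwa [show i + (4 - i) = 4 by have := Finset.mem_range.1 hi; omega] at this
  have hH' : piL L H = h := by
    conv_rhs => rw [h.as_sum_range_C_mul_X_pow' (n := 5) (by omega)]
    simp [H, piL]
  have hXH : (X 1 ^ N * H).IsHomogeneous (N + 1 + 3) := (isHomogeneous_X_pow (R := L) (1 : Fin 3) N).mul hH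
  obtain ⟨A, hA, hA'⟩ := hom_lift g hg (N + 1) _ hXH (Ideal.mul_mem_right _ _ hN)
  refine claimB_aux g hspan h N (fun j => piL L (A j)) (fun j => piL_natDegree _ _ (hA j)) ?_
  have := congrArg (piL L) hA'
  rw [map_mul, hH', map_sum] at this
  simp only [map_mul] at this
  rw [← this]
  simp [piL]

lemma fr_aux {L M N G : Type} [Field L] [AddCommGroup M] [Module L M] [AddCommGroup N] [Module L N]
    [AddCommGroup G] [Module L G] (V : Submodule L M) [FiniteDimensional L V] (p : M →ₗ[L] N)
    (m : G →ₗ[L] M) (hinj : Function.Injective m) (hm : ∀ x, m x ∈ V) (hp : ∀ x, p (m x) = 0)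
    (E : Submodule L N) (hE : E ≤ Submodule.map p V) :
    Module.finrank L E + Module.finrank L G ≤ Module.finrank L V := by
  let q : V →ₗ[L] N := p.comp V.subtype
  have h1 := LinearMap.finrank_range_add_finrank_ker q
  have h2 : E ≤ LinearMap.range q := by
    rw [LinearMap.range_comp, Submodule.range_subtype]; exact hE
  have h3 := Submodule.finrank_mono h2
  let μ : G →ₗ[L] LinearMap.ker q := LinearMap.codRestrict _ (LinearMap.codRestrict V m hm) (fun x => hp x)
  have h4 : Module.finrank L G ≤ Module.finrank L (LinearMap.ker q) := by
    apply LinearMap.finrank_le_finrank_of_injective (f := μ)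
    intro x y hxy
    exact hinj (congrArg (fun z : LinearMap.ker q => ((z : V) : M)) hxy)
  omega

lemma piL_X0 {L : Type} [Field L] (p : MvPolynomial (Fin 3) L) : piL L (X 0 * p) = 0 := by
  simp [piL]

lemma ker_bound {L J : Type} [Field L] [Fintype J] (g : J → MvPolynomial (Fin 3) L)
    (hg : ∀ j, (g j).IsHomogeneous 3)
    (hrad : ∀ a, ∃ N, (X a : MvPolynomial (Fin 3) L) ^ N ∈ Ideal.span (Set.range g))
    (hspan : ∀ c : J → L, ∑ j, c j * eval ![0, 0, 1] (g j) = 0 →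
      ∃ w : Fin 3 → J → L, Psi g w = 0 ∧ w 2 = c) :
    Module.finrank L (LinearMap.ker (Psi g)) + 10 ≤ 3 * Fintype.card J := by
  classical
  have hA := claimA g hg hrad hspan
  have h0 := LinearMap.finrank_range_add_finrank_ker (Psi g)
  have h00 : Module.finrank L (Fin 3 → J → L) = 3 * Fintype.card J := by
    rw [Module.finrank_pi_fintype]; simp
  rw [h00] at h0
  let G := Submodule.span L (Set.range g)
  have hm : ∀ p ∈ G, X 0 * p ∈ LinearMap.range (Psi g) := by
    intro p hp
    obtain ⟨c, rfl⟩ := (Submodule.mem_span_range_iff_exists_fun L).1 hp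
    refine ⟨![c, 0, 0], ?_⟩
    simp [Psi, Fin.sum_univ_three, Finset.mul_sum]
  have h5 := fr_aux (LinearMap.range (Psi g)) (piL L).toLinearMap
    ((LinearMap.mulLeft L (X 0)).comp G.subtype) (by
      intro p p' hpp
      have hpp : (X 0 : MvPolynomial (Fin 3) L) * p.1 = X 0 * p'.1 := hpp
      have := mul_left_cancel₀ (X_ne_zero (0 : Fin 3)) hpp
      exact Subtype.ext this) (fun p => hm p p.2)
    (by
      intro p
      exact piL_X0 p.1) (Polynomial.degreeLT L 5) (by
      intro h hh
      obtain ⟨w, hw⟩ := claimB g hg hrad hspan h (by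
        by_cases h0 : h = 0
        · simp [h0]
        · rw [Polynomial.mem_degreeLT, Polynomial.degree_eq_natDegree h0] at hh
          have : h.natDegree < 5 := by exact_mod_cast hh
          omega)
      exact ⟨Psi g w, ⟨w, rfl⟩, hw⟩)
  rw [(Polynomial.degreeLTEquiv L 5).finrank_eq, Module.finrank_fin_fun] at h5
  have hA : 5 ≤ Module.finrank L G := hA
  omega


/-- the variables indexed by `s` are algebraically independent modulo `P` -/
def IndMod {K σ : Type} [Field K] (P : Ideal (MvPolynomial σ K)) (s : Set σ) : Prop :=
  ∀ f ∈ supported K s, f ∈ P → f = 0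

lemma IndMod.mono {K σ : Type} [Field K] {P Q : Ideal (MvPolynomial σ K)} (h : P ≤ Q) {s : Set σ}
    (hs : IndMod Q s) : IndMod P s := fun f hf hP => hs f hf (h hP)

lemma indMod_iff {K σ : Type} [Field K] (P : Ideal (MvPolynomial σ K)) (s : Set σ) :
    IndMod P s ↔ AlgebraicIndepOn K (fun i => Ideal.Quotient.mk P (X i)) s := by
  rw [AlgebraicIndepOn, algebraicIndependent_iff]
  have key : ∀ p : MvPolynomial s K, aeval (fun i : s => Ideal.Quotient.mk P (X i.1)) p =
      Ideal.Quotient.mk P (rename (fun i : s => i.1) p) := by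
    intro p
    have : (Ideal.Quotient.mkₐ K P).comp (rename (fun i : s => i.1)) =
        aeval (fun i : s => Ideal.Quotient.mk P (X i.1)) := by
      ext i; simp
    rw [← this]; rfl
  constructor
  · intro h p hp
    rw [key, Ideal.Quotient.eq_zero_iff_mem] at hp
    have := h _ (by rw [supported_eq_range_rename]; exact ⟨p, rfl⟩) hp
    exact rename_injective _ Subtype.val_injective (this.trans (map_zero _).symm)
  · intro h f hf hP
    rw [supported_eq_range_rename] at hf
    obtain ⟨p, rfl⟩ := hf
    have := h p (by
      rw [key, Ideal.Quotient.eq_zero_iff_mem]; exact hP)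
    rw [this]; simp

lemma IndMod.extend {K σ : Type} [Field K] {P Q : Ideal (MvPolynomial σ K)} [P.IsPrime] (h : P < Q) {s : Set σ}
    (hs : IndMod Q s) : ∃ i ∉ s, IndMod P (insert i s) := by
  by_contra! hcon
  have hsP := (indMod_iff P s).1 (hs.mono h.le)
  set x : σ → MvPolynomial σ K ⧸ P := fun i => Ideal.Quotient.mk P (X i) with hx
  have h1 : ∀ i, IsAlgebraic (Algebra.adjoin K (x '' s)) (x i) := by
    intro i
    by_contra hi
    by_cases his : i ∈ s
    · exact hi (isAlgebraic_algebraMap (⟨x i, Algebra.subset_adjoin ⟨i, his, rfl⟩⟩ : Algebra.adjoin K (x '' s)))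
    · exact hcon i his ((indMod_iff P _).2 (hsP.insert hi))
  obtain ⟨f, hfQ, hfP⟩ := Set.exists_of_ssubset h
  have hmap : ∀ t : Set σ, Algebra.adjoin K (x '' t) = (supported K t).map (Ideal.Quotient.mkₐ K P) := by
    intro t
    rw [supported, AlgHom.map_adjoin, Set.image_image]
    rfl
  have h2 : IsAlgebraic (Algebra.adjoin K (x '' s)) (Ideal.Quotient.mk P f) := by
    refine IsAlgebraic.adjoin_of_forall_isAlgebraic (s := x '' Set.univ) ?_ ?_
    · rintro _ ⟨⟨i, _, rfl⟩, _⟩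
      exact h1 i
    · refine isAlgebraic_algebraMap (⟨Ideal.Quotient.mk P f, ?_⟩ : Algebra.adjoin K (x '' Set.univ))
      rw [hmap]
      exact ⟨f, by rw [supported_univ]; trivial, rfl⟩
  obtain ⟨⟨r, hr⟩, hr0, hd⟩ := h2.exists_nonzero_dvd (mem_nonZeroDivisors_of_ne_zero (by
    rwa [Ne, Ideal.Quotient.eq_zero_iff_mem]))
  rw [hmap] at hr
  obtain ⟨H, hH, rfl⟩ := hr
  obtain ⟨c, hc⟩ := hd
  obtain ⟨c, rfl⟩ := Ideal.Quotient.mk_surjective c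
  have hc : Ideal.Quotient.mk P H = Ideal.Quotient.mk P f * Ideal.Quotient.mk P c := hc
  rw [← map_mul, Ideal.Quotient.eq] at hc
  have : H ∈ Q := by
    have := Q.add_mem (h.le hc) (Q.mul_mem_right c hfQ)
    simpa using this
  have := hs H hH this
  apply hr0
  apply Subtype.ext
  simp [this]


lemma minor_LI {L : Type} [Field L] {N : ℕ} (v : Fin 3 → Fin N → L) (s : Fin 3 → Fin N)
    (h : Matrix.det (Matrix.of fun i j => v i (s j)) ≠ 0) : LinearIndependent L v := by
  have := Matrix.linearIndependent_rows_of_det_ne_zero h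
  exact LinearIndependent.of_comp (LinearMap.funLeft L L s) this

lemma LI_minor {L : Type} [Field L] {N : ℕ} (v : Fin 3 → Fin N → L) (h : LinearIndependent L v) :
    ∃ s : Fin 3 → Fin N, Matrix.det (Matrix.of fun i j => v i (s j)) ≠ 0 := by
  have hr : (Matrix.of v).rank = 3 := by
    have := LinearIndependent.rank_matrix (M := Matrix.of v) h
    simpa using this
  rw [Matrix.rank_eq_finrank_span_cols] at hr
  obtain ⟨f, hf, -, hLI⟩ := Submodule.exists_fun_fin_finrank_span_eq L (Set.range (Matrix.of v).col)
  revert f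
  rw [hr]
  intro f hf hLI
  choose s hs using hf
  refine ⟨s, ?_⟩
  have : IsUnit (Matrix.of fun i j => v i (s j)) := by
    rw [← Matrix.linearIndependent_cols_iff_isUnit]
    have hfe : (Matrix.of fun i j => v i (s j)).col = f := by
      ext j i
      rw [← hs]
      rfl
    rw [hfe]
    exact hLI
  rw [Matrix.isUnit_iff_isUnit_det] at this
  exact this.ne_zero

/-- evaluation at a frame -/
noncomputable abbrev ev {n : ℕ} (v : Fin 3 → Fin (n + 1) → KK) :
    MvPolynomial (Fin 3 × Fin (n + 1)) KK →+* KK := eval (fun p => v p.1 p.2)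

/-- change of frame -/
noncomputable def act {n : ℕ} (M : Matrix (Fin 3) (Fin 3) KK) (v : Fin 3 → Fin (n + 1) → KK) :
    Fin 3 → Fin (n + 1) → KK := fun a => ∑ b, M a b • v b

lemma act_span {n : ℕ} (M : Matrix (Fin 3) (Fin 3) KK) (v : Fin 3 → Fin (n + 1) → KK) :
    Submodule.span KK (Set.range (act M v)) ≤ Submodule.span KK (Set.range v) := by
  rw [Submodule.span_le]
  rintro _ ⟨a, rfl⟩
  exact Submodule.sum_mem _ fun b _ => Submodule.smul_mem _ _ (Submodule.subset_span ⟨b, rfl⟩)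

lemma exists_act {n : ℕ} (w v : Fin 3 → Fin (n + 1) → KK)
    (h : Submodule.span KK (Set.range w) ≤ Submodule.span KK (Set.range v)) : ∃ M, w = act M v := by
  have : ∀ a, ∃ c : Fin 3 → KK, ∑ b, c b • v b = w a := fun a =>
    (Submodule.mem_span_range_iff_exists_fun KK).1 (h (Submodule.subset_span ⟨a, rfl⟩))
  choose M hM using this
  exact ⟨M, funext fun a => (hM a).symm⟩

lemma span_eq_of_le {n : ℕ} (w v : Fin 3 → Fin (n + 1) → KK) (hw : LinearIndependent KK w)
    (h : Submodule.span KK (Set.range w) ≤ Submodule.span KK (Set.range v)) :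
    LinearIndependent KK v ∧ Submodule.span KK (Set.range w) = Submodule.span KK (Set.range v) := by
  have h1 : Module.finrank KK (Submodule.span KK (Set.range w)) = 3 := by
    rw [finrank_span_eq_card hw]; simp
  have h2 := Submodule.finrank_mono h
  have h3 : Module.finrank KK (Submodule.span KK (Set.range v)) ≤ 3 := by
    have := finrank_range_le_card (R := KK) v
    rwa [Fintype.card_fin] at this
  refine ⟨?_, Submodule.eq_of_le_of_finrank_le h (by omega)⟩
  rw [linearIndependent_iff_card_eq_finrank_span, Set.finrank]
  simp; omega

/-- pullback of polynomials by a change of frame -/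
noncomputable def subM {n : ℕ} (M : Matrix (Fin 3) (Fin 3) KK) :
    MvPolynomial (Fin 3 × Fin (n + 1)) KK →ₐ[KK] MvPolynomial (Fin 3 × Fin (n + 1)) KK :=
  aeval (fun p => ∑ b, M p.1 b • X (b, p.2))

lemma ev_subM {n : ℕ} (M : Matrix (Fin 3) (Fin 3) KK) (v : Fin 3 → Fin (n + 1) → KK) (f) :
    ev v (subM M f) = ev (act M v) f := by
  have : (aeval (fun p : Fin 3 × Fin (n + 1) => v p.1 p.2)).comp (subM M) =
      aeval (R := KK) (fun p : Fin 3 × Fin (n + 1) => act M v p.1 p.2) := by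
    ext p
    simp [subM, act]
  have := DFunLike.congr_fun this f
  simpa [aeval_eq_eval] using this

noncomputable def minorP {n : ℕ} (s : Fin 3 → Fin (n + 1)) : MvPolynomial (Fin 3 × Fin (n + 1)) KK :=
  Matrix.det (Matrix.of fun i j => X (i, s j))

lemma ev_minorP {n : ℕ} (s : Fin 3 → Fin (n + 1)) (v : Fin 3 → Fin (n + 1) → KK) :
    ev v (minorP s) = Matrix.det (Matrix.of fun i j => v i (s j)) := by
  rw [minorP, RingHom.map_det]
  congr 1
  ext i j
  simp [ev]

/-- ideal of functions vanishing on all frames of members of Z -/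
noncomputable def PZ {n : ℕ} (Z : Set (Submodule KK (Fin (n + 1) → KK))) :
    Ideal (MvPolynomial (Fin 3 × Fin (n + 1)) KK) where
  carrier := {f | ∀ v, LinearIndependent KK v → Submodule.span KK (Set.range v) ∈ Z → ev v f = 0}
  add_mem' := by
    intro a b ha hb v h1 h2
    rw [map_add, ha v h1 h2, hb v h1 h2, add_zero]
  zero_mem' := fun v _ _ => map_zero _
  smul_mem' := by
    intro c a ha v h1 h2
    rw [smul_eq_mul, map_mul, ha v h1 h2, mul_zero]

lemma mem_PZ {n : ℕ} {Z : Set (Submodule KK (Fin (n + 1) → KK))} {f} : f ∈ PZ Z ↔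
    ∀ v, LinearIndependent KK v → Submodule.span KK (Set.range v) ∈ Z → ev v f = 0 := Iff.rfl

def Cf {n : ℕ} (Z : Set (Submodule KK (Fin (n + 1) → KK))) (f : MvPolynomial (Fin 3 × Fin (n + 1)) KK) :
    Set (Submodule KK (Fin (n + 1) → KK)) :=
  {Λ | Λ ∈ Z ∧ ∀ v, LinearIndependent KK v → Submodule.span KK (Set.range v) = Λ → ev v f = 0}

lemma Cf_closed {n : ℕ} {Z : Set (Submodule KK (Fin (n + 1) → KK))} (hZ : GrClosed 2 n Z)
    (f : MvPolynomial (Fin 3 × Fin (n + 1)) KK) : GrClosed 2 n (Cf Z f) := by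
  obtain ⟨hd, S, hS⟩ := hZ
  refine ⟨fun W hW => hd W hW.1, S ∪ Set.range (fun p : Matrix (Fin 3) (Fin 3) KK × (Fin 3 → Fin (n + 1)) =>
    subM p.1 (minorP p.2 * f)), ?_⟩
  ext v
  have hv := Set.ext_iff.1 hS v
  simp only [Set.mem_setOf_eq] at hv ⊢
  constructor
  · intro h g hg
    rcases hg with hg | ⟨⟨M, s⟩, rfl⟩
    · exact hv.1 (fun h' => (h h').1) g hg
    · change ev v (subM M (minorP s * f)) = 0
      rw [ev_subM, map_mul]
      by_cases hw : LinearIndependent KK (act M v)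
      · obtain ⟨h1, h2⟩ := span_eq_of_le _ _ hw (act_span M v)
        rw [(h h1).2 _ hw h2, mul_zero]
      · rw [ev_minorP]
        by_contra h0
        exact hw (minor_LI _ s (left_ne_zero_of_mul h0))
  · intro h hvLI
    refine ⟨hv.2 (fun g hg => h g (Or.inl hg)) hvLI, ?_⟩
    intro w hw hspan
    obtain ⟨M, rfl⟩ := exists_act w v hspan.le
    obtain ⟨s, hs⟩ := LI_minor _ hw
    have := h _ (Or.inr ⟨(M, s), rfl⟩)
    change ev v (subM M (minorP s * f)) = 0 at this
    rw [ev_subM, map_mul, ev_minorP] at this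
    exact (mul_eq_zero.1 this).resolve_left hs

lemma exists_frame {n : ℕ} (Λ : Submodule KK (Fin (n + 1) → KK)) (h : Module.finrank KK Λ = 3) :
    ∃ v : Fin 3 → Fin (n + 1) → KK, LinearIndependent KK v ∧ Submodule.span KK (Set.range v) = Λ := by
  let b := Module.finBasisOfFinrankEq KK Λ h
  refine ⟨fun i => b i, b.linearIndependent.map' Λ.subtype (Submodule.ker_subtype _), ?_⟩
  have := congrArg (Submodule.map Λ.subtype) b.span_eq
  rw [Submodule.map_span, Submodule.map_top, Submodule.range_subtype, ← Set.range_comp] at this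
  exact this

/-- polynomial in the matrix entries: f at the frame M·v -/
noncomputable def tilde {n : ℕ} (v : Fin 3 → Fin (n + 1) → KK) :
    MvPolynomial (Fin 3 × Fin (n + 1)) KK →ₐ[KK] MvPolynomial (Fin 3 × Fin 3) KK :=
  aeval (fun p => ∑ b, v b p.2 • X (p.1, b))

lemma eval_tilde {n : ℕ} (M : Matrix (Fin 3) (Fin 3) KK) (v : Fin 3 → Fin (n + 1) → KK) (f) :
    eval (fun p => M p.1 p.2) (tilde v f) = ev (act M v) f := by
  have : (aeval (fun p : Fin 3 × Fin 3 => M p.1 p.2)).comp (tilde v) =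
      aeval (R := KK) (fun p : Fin 3 × Fin (n + 1) => act M v p.1 p.2) := by
    ext p
    simp [tilde, act, mul_comm]
  have := DFunLike.congr_fun this f
  simpa [aeval_eq_eval] using this

lemma tilde_zero {n : ℕ} (v : Fin 3 → Fin (n + 1) → KK) (hv : LinearIndependent KK v)
    (f : MvPolynomial (Fin 3 × Fin (n + 1)) KK)
    (h : ∀ w, LinearIndependent KK w → Submodule.span KK (Set.range w) = Submodule.span KK (Set.range v) → ev w f = 0) :
    tilde v f = 0 := by
  have h1 : (Matrix.mvPolynomialX (Fin 3) (Fin 3) KK).det * tilde v f = 0 := by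
    apply MvPolynomial.funext
    intro x
    rw [map_mul, map_zero]
    let M : Matrix (Fin 3) (Fin 3) KK := fun i j => x (i, j)
    have hx : x = fun p => M p.1 p.2 := rfl
    rw [hx, eval_tilde, RingHom.map_det]
    have hM : (eval fun p : Fin 3 × Fin 3 => M p.1 p.2).mapMatrix (Matrix.mvPolynomialX (Fin 3) (Fin 3) KK) = M := by
      ext i j; simp
    rw [hM]
    by_cases hd : M.det = 0
    · rw [hd, zero_mul]
    · have hle : Submodule.span KK (Set.range v) ≤ Submodule.span KK (Set.range (act M v)) := by
        have : act M⁻¹ (act M v) = v := by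
          have h2 : M⁻¹ * M = 1 := Matrix.nonsing_inv_mul M (isUnit_iff_ne_zero.2 hd)
          have : ∀ N v', act N v' = (Matrix.of N * Matrix.of v' : Matrix (Fin 3) (Fin (n + 1)) KK) := by
            intro N v'
            ext a j
            simp [act, Matrix.mul_apply]
            rfl
          rw [this, this]
          change M⁻¹ * (M * Matrix.of v) = Matrix.of v
          rw [← Matrix.mul_assoc, h2, Matrix.one_mul]
        conv_lhs => rw [← this]
        exact act_span _ _
      obtain ⟨h3, h4⟩ := span_eq_of_le _ _ hv hle
      rw [h _ h3 h4.symm, mul_zero]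
  exact (mul_eq_zero.1 h1).resolve_left (Matrix.det_mvPolynomialX_ne_zero _ _)

lemma PZ_prime {n : ℕ} {Z : Set (Submodule KK (Fin (n + 1) → KK))} (hZ : GrVariety 2 n Z) : (PZ Z).IsPrime := by
  obtain ⟨hc, ⟨Λ, hΛ⟩, hirr⟩ := hZ
  refine ⟨?_, ?_⟩
  · rw [Ideal.ne_top_iff_one]
    intro h1
    obtain ⟨v, hv, hs⟩ := exists_frame Λ (hc.1 Λ hΛ)
    have := h1 v hv (hs ▸ hΛ)
    simp at this
  · intro f h hfh
    have hsub : Z ⊆ Cf Z f ∪ Cf Z h := by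
      intro Λ hΛ
      obtain ⟨v, hv, hs⟩ := exists_frame Λ (hc.1 Λ hΛ)
      have h0 := tilde_zero v hv (f * h) (fun w hw hws => hfh w hw (by rw [hws, hs]; exact hΛ))
      rw [map_mul, mul_eq_zero] at h0
      have key : ∀ g, tilde v g = 0 → Λ ∈ Cf Z g := by
        intro g hg
        refine ⟨hΛ, fun w hw hws => ?_⟩
        obtain ⟨M, rfl⟩ := exists_act w v (hws.trans hs.symm).le
        rw [← eval_tilde, hg, map_zero]
      exact h0.imp (key f) (key h)
    refine (hirr _ _ (Cf_closed hc f) (Cf_closed hc h) hsub).imp ?_ ?_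
    · intro h' v hv hs; exact (h' hs).2 v hv rfl
    · intro h' v hv hs; exact (h' hs).2 v hv rfl

lemma PZ_anti {n : ℕ} {Z Z' : Set (Submodule KK (Fin (n + 1) → KK))} (h : Z ⊆ Z') : PZ Z' ≤ PZ Z :=
  fun _ hf v hv hs => hf v hv (h hs)

lemma PZ_strict {n : ℕ} {Z Z' : Set (Submodule KK (Fin (n + 1) → KK))} (hZ : GrClosed 2 n Z)
    (hZ' : GrClosed 2 n Z') (h : Z ⊂ Z') : PZ Z' < PZ Z := by
  refine lt_of_le_of_ne (PZ_anti h.1) ?_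
  intro heq
  apply h.2
  intro Λ hΛ
  obtain ⟨v, hv, hs⟩ := exists_frame Λ (hZ'.1 Λ hΛ)
  obtain ⟨hd, S, hS⟩ := hZ
  have h1 := Set.ext_iff.1 hS
  have hSP : ∀ f ∈ S, f ∈ PZ Z := by
    intro f hf w hw hws
    exact (h1 w).1 (fun _ => hws) f hf
  have := (h1 v).2 (fun f hf => by
    have := hSP f hf
    rw [← heq] at this
    exact this v hv (hs ▸ hΛ))
  rw [← hs]
  exact this hv

lemma PZ_ind9 {n : ℕ} {Z : Set (Submodule KK (Fin (n + 1) → KK))} (hZ : GrVariety 2 n Z) :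
    ∃ s : Set (Fin 3 × Fin (n + 1)), s.ncard = 9 ∧ IndMod (PZ Z) s := by
  obtain ⟨hc, ⟨Λ, hΛ⟩, hirr⟩ := hZ
  obtain ⟨v, hv, hs⟩ := exists_frame Λ (hc.1 Λ hΛ)
  obtain ⟨s, hdet⟩ := LI_minor v hv
  have hsinj : Function.Injective s := by
    intro a b hab
    by_contra hne
    exact hdet (Matrix.det_zero_of_column_eq hne (fun k => by simp [hab]))
  let ι : Fin 3 × Fin 3 → Fin 3 × Fin (n + 1) := fun p => (p.1, s p.2)
  have hι : Function.Injective ι := by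
    rintro ⟨a, b⟩ ⟨c, d⟩ h
    simp only [ι, Prod.mk.injEq] at h
    exact Prod.ext h.1 (hsinj h.2)
  refine ⟨Set.range ι, ?_, ?_⟩
  · rw [← Set.image_univ, Set.ncard_image_of_injective _ hι, Set.ncard_univ]; simp
  · intro f hf hfP
    have hf' : f ∈ (rename (R := KK) ι).range := by
      rw [supported, ← Set.range_comp] at hf
      rw [← Algebra.map_top, ← adjoin_range_X, AlgHom.map_adjoin, ← Set.range_comp]
      convert hf using 3
      ext p
      simp
    obtain ⟨H, rfl⟩ := hf'
    have h0 := tilde_zero v hv _ (fun w hw hws => hfP w hw (by rw [hws, hs]; exact hΛ))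
    have hH : H = 0 := by
      apply MvPolynomial.funext
      intro x
      -- find M with (M v)_{a, s b} = x (a,b)
      set V : Matrix (Fin 3) (Fin 3) KK := Matrix.of fun i j => v i (s j) with hV
      let Y : Matrix (Fin 3) (Fin 3) KK := fun i j => x (i, j)
      have h1 := congrArg (eval (fun p => (Y * V⁻¹) p.1 p.2)) h0
      rw [eval_tilde, map_zero] at h1
      change eval _ (rename ι H) = 0 at h1
      rw [eval_rename] at h1
      rw [map_zero, ← h1]
      congr 2
      ext ⟨a, b⟩
      have h2 : Y * V⁻¹ * V = Y := by
        rw [Matrix.mul_assoc, Matrix.nonsing_inv_mul V (isUnit_iff_ne_zero.2 hdet), Matrix.mul_one]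
      have h3 := congrFun (congrFun h2 a) b
      change x (a, b) = act (Y * V⁻¹) v a (s b)
      rw [show x (a, b) = Y a b from rfl, ← h3, Matrix.mul_apply]
      simp [act, hV]
    rw [hH]; simp

lemma chain_ind {n : ℕ} {Φ : Set (Submodule KK (Fin (n + 1) → KK))}
    (p : LTSeries {W : Set (Submodule KK (Fin (n + 1) → KK)) // GrVariety 2 n W ∧ W ⊆ Φ}) :
    ∃ s : Set (Fin 3 × Fin (n + 1)), s.ncard = p.length + 9 ∧ IndMod (PZ Φ) s := by
  have : ∀ k : ℕ, ∀ hk : k < p.length + 1, ∃ s : Set (Fin 3 × Fin (n + 1)), s.ncard = k + 9 ∧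
      IndMod (PZ (p ⟨k, hk⟩).1) s := by
    intro k
    induction k with
    | zero =>
      intro hk
      obtain ⟨s, h1, h2⟩ := PZ_ind9 (p ⟨0, hk⟩).2.1
      exact ⟨s, by omega, h2⟩
    | succ k ih =>
      intro hk
      obtain ⟨s, h1, h2⟩ := ih (by omega)
      have hlt : p ⟨k, by omega⟩ < p ⟨k + 1, hk⟩ := p.strictMono (by simp)
      haveI := PZ_prime (p ⟨k + 1, hk⟩).2.1
      obtain ⟨i, hi, h3⟩ := h2.extend (PZ_strict (p ⟨k, by omega⟩).2.1.1 (p ⟨k + 1, hk⟩).2.1.1 hlt)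
      refine ⟨insert i s, ?_, h3⟩
      rw [Set.ncard_insert_of_notMem hi, h1]
  obtain ⟨s, h1, h2⟩ := this p.length (by omega)
  exact ⟨s, h1, h2.mono (PZ_anti (p _).2.2)⟩


section generic
variable {K L : Type} [Field K] [Field L] [CharZero K] [Algebra K L] {m : ℕ}

/-- generic point of the generic plane -/
noncomputable def yv (v : Fin 3 → Fin m → L) (j : Fin m) : MvPolynomial (Fin 3) L := ∑ a, v a j • X a

noncomputable def gv (F : MvPolynomial (Fin m) K) (v : Fin 3 → Fin m → L) (j : Fin m) :
    MvPolynomial (Fin 3) L := aeval (yv v) (pderiv j F)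

lemma yv_hom (v : Fin 3 → Fin m → L) (j : Fin m) : (yv v j).IsHomogeneous 1 := by
  apply IsHomogeneous.sum
  intro a _
  rw [smul_eq_C_mul]
  exact (isHomogeneous_X _ a).C_mul _

lemma gv_hom (F : MvPolynomial (Fin m) K) (hF : F.IsHomogeneous 4) (v : Fin 3 → Fin m → L) (j : Fin m) :
    (gv F v j).IsHomogeneous 3 := by
  have := (hF.pderiv (i := j)).aeval (yv v) (yv_hom v)
  simpa [gv] using this

/-- K-rational evaluation points suffice -/
lemma eq_zero_of_eval (p : MvPolynomial (Fin 3) L)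
    (h : ∀ q : Fin 3 → K, eval (fun a => algebraMap K L (q a)) p = 0) : p = 0 := by
  refine funext_set (fun _ => Set.range (algebraMap K L)) (fun _ => ?_) ?_
  · exact Set.infinite_range_of_injective (algebraMap K L).injective
  · intro x hx
    choose q hq using fun a => hx a trivial
    have : x = fun a => algebraMap K L (q a) := funext fun a => (hq a).symm
    rw [this, h, map_zero]

lemma eval_aeval_yv (v : Fin 3 → Fin m → L) (q : Fin 3 → L) (F : MvPolynomial (Fin m) K) :
    eval q (aeval (yv v) F) = aeval (fun j => ∑ a, v a j * q a) F := by
  have : ((aeval (R := L) q).restrictScalars K).comp (aeval (R := K) (yv v)) =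
      aeval (fun j => ∑ a, v a j * q a) := by
    ext j
    simp [yv]
  have := DFunLike.congr_fun this F
  simpa [aeval_eq_eval] using this

variable (F : MvPolynomial (Fin m) K) (v : Fin 3 → Fin m → L)
  (hFv : ∀ q : Fin 3 → K, aeval (fun j => ∑ a, v a j * algebraMap K L (q a)) F = 0)

include hFv in
lemma Psi_der (D : Derivation K L L) : Psi (gv F v) (fun a j => D (v a j)) = 0 := by
  refine eq_zero_of_eval (K := K) _ fun q => ?_
  have h := derivation_aeval D (fun j => ∑ a, v a j * algebraMap K L (q a)) F
  rw [hFv q, map_zero] at h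
  simp only [Psi, LinearMap.coe_mk, AddHom.coe_mk, map_sum, map_mul]
  rw [h]
  refine Finset.sum_congr rfl fun j _ => ?_
  rw [gv, eval_aeval_yv, mul_comm]
  congr 1
  rw [map_sum]
  refine Finset.sum_congr rfl fun a _ => ?_
  simp [Derivation.leibniz, smul_eval, mul_comm]

include hFv in
lemma gv_rel (a : Fin 3) : ∑ j, v a j • gv F v j = 0 := by
  have h0 : aeval (yv v) F = 0 := by
    refine eq_zero_of_eval (K := K) _ fun q => ?_
    rw [eval_aeval_yv, hFv]
  have h := derivation_aeval ((pderiv (R := L) a).restrictScalars K) (yv v) F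
  rw [h0, map_zero] at h
  rw [h]
  refine Finset.sum_congr rfl fun j _ => ?_
  change _ = gv F v j * pderiv a (yv v j)
  rw [smul_eq_C_mul, mul_comm]
  congr 1
  simp [yv, pderiv_X, Pi.single_apply, smul_eq_C_mul, eq_comm]

lemma gv_rad [IsAlgClosed K] (hns : ∀ z : Fin m → K, (∀ i, eval z (pderiv i F) = 0) → z = 0)
    (s : Fin 3 → Fin m) (hs : Matrix.det (Matrix.of fun i j => v i (s j)) ≠ 0) (a : Fin 3) :
    ∃ N, (X a : MvPolynomial (Fin 3) L) ^ N ∈ Ideal.span (Set.range (gv F v)) := by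
  have h1 : ∀ j, yv v j ∈ (Ideal.span (Set.range (gv F v))).radical := by
    intro j
    have h2 : (X j : MvPolynomial (Fin m) K) ∈ (Ideal.span (Set.range fun i => pderiv i F)).radical := by
      rw [← vanishingIdeal_zeroLocus_eq_radical (K := K), zeroLocus_span, mem_vanishingIdeal_iff]
      intro z hz
      have := hns z (fun i => by
        have := hz _ ⟨i, rfl⟩
        simpa [aeval_eq_eval] using this)
      simp [this]
    obtain ⟨N, hN⟩ := h2
    refine ⟨N, ?_⟩
    have := Ideal.mem_map_of_mem (aeval (R := K) (yv v)) hN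
    rw [Ideal.map_span, ← Set.range_comp, map_pow, aeval_X] at this
    exact this
  set V : Matrix (Fin 3) (Fin 3) L := Matrix.of fun i j => v i (s j) with hV
  have hVV : V * V⁻¹ = 1 := Matrix.mul_nonsing_inv V (isUnit_iff_ne_zero.2 hs)
  have h3 : (X a : MvPolynomial (Fin 3) L) = ∑ b, C (V⁻¹ b a) * yv v (s b) := by
    have : ∀ b, C (V⁻¹ b a) * yv v (s b) = ∑ c, (V c b * V⁻¹ b a) • X c := by
      intro b
      rw [yv, Finset.mul_sum]
      refine Finset.sum_congr rfl fun c _ => ?_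
      rw [hV, Matrix.of_apply, mul_comm (v c (s b)), mul_smul, smul_eq_C_mul (a := V⁻¹ b a)]
    simp only [this]
    rw [Finset.sum_comm]
    simp only [← Finset.sum_smul, ← Matrix.mul_apply, hVV]
    simp [Matrix.one_apply]
  change _ ∈ (Ideal.span (Set.range (gv F v))).radical
  rw [h3]
  exact Ideal.sum_mem _ fun b _ => Ideal.mul_mem_left _ _ (h1 _)

theorem main_bound [IsAlgClosed K] [Algebra.EssFiniteType K L] (hF : F.IsHomogeneous 4)
    (hFv : ∀ q : Fin 3 → K, aeval (fun j => ∑ a, v a j * algebraMap K L (q a)) F = 0)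
    (hns : ∀ z : Fin m → K, (∀ i, eval z (pderiv i F) = 0) → z = 0)
    (hLI : LinearIndependent L v)
    (s : Fin 3 → Fin m) (hs : Matrix.det (Matrix.of fun i j => v i (s j)) ≠ 0)
    (i : Fin m) (hcov : AlgebraicIndependent K (fun j : {j // j ≠ i} => v 2 j))
    (T : Set (Fin 3 × Fin m)) (hT : AlgebraicIndependent K (fun p : T => v p.1.1 p.1.2)) :
    T.ncard + 10 ≤ 3 * m ∧ 8 ≤ m := by
  classical
  have hrad := gv_rad F v hns s hs
  have hg := gv_hom F hF v
  -- evaluation of Psi at the point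
  have hev : ∀ w, Psi (gv F v) w = 0 → ∑ j, w 2 j * eval ![0, 0, 1] (gv F v j) = 0 := by
    intro w hw
    have := congrArg (eval ![(0 : L), 0, 1]) hw
    simpa [Psi, Fin.sum_univ_three, smul_eval] using this
  choose D hD using fun b => exists_derivation _ hcov b
  have hsum : ∀ f : Fin m → L, ∑ j, f j = f i + ∑ j : {j // j ≠ i}, f j := by
    intro f
    rw [Fintype.sum_eq_add_sum_subtype_ne f i]
  have hγ : eval ![0, 0, 1] (gv F v i) ≠ 0 := by
    intro h0
    obtain ⟨j0, hj0⟩ := ptne _ hrad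
    have hne : j0 ≠ i := by rintro rfl; exact hj0 h0
    have := hev _ (Psi_der F v hFv (D ⟨j0, hne⟩))
    rw [hsum, h0, mul_zero, zero_add] at this
    simp only [hD] at this
    simp at this
    exact hj0 this
  have hspan : ∀ c : Fin m → L, ∑ j, c j * eval ![0, 0, 1] (gv F v j) = 0 →
      ∃ w : Fin 3 → Fin m → L, Psi (gv F v) w = 0 ∧ w 2 = c := by
    intro c hc
    let w : Fin 3 → Fin m → L := ∑ b : {j // j ≠ i}, c b • (fun a j => D b (v a j))
    have hw : Psi (gv F v) w = 0 := by
      rw [map_sum]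
      refine Finset.sum_eq_zero fun b _ => ?_
      rw [map_smul, Psi_der F v hFv, smul_zero]
    have hw2 : ∀ j : {j // j ≠ i}, w 2 j = c j := by
      intro j
      simp [w, Finset.sum_apply, hD]
    refine ⟨w, hw, ?_⟩
    have h1 := hev w hw
    rw [hsum] at h1 hc
    simp only [hw2] at h1
    have h2 : w 2 i = c i := by
      apply mul_right_cancel₀ hγ
      linear_combination h1 - hc
    ext j
    by_cases hj : j = i
    · rw [hj, h2]
    · exact hw2 ⟨j, hj⟩
  constructor
  · have h1 := ker_bound _ hg hrad hspan
    rw [Fintype.card_fin] at h1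
    choose E hE using fun b => exists_derivation _ hT b
    let κ : T → LinearMap.ker (Psi (gv F v)) := fun p =>
      ⟨fun a j => E p (v a j), Psi_der F v hFv (E p)⟩
    have hκ : LinearIndependent L κ := by
      rw [Fintype.linearIndependent_iff]
      intro c hc p
      have h2 := congrArg (fun z : LinearMap.ker (Psi (gv F v)) => (z : Fin 3 → Fin m → L) p.1.1 p.1.2) hc
      simp only [AddSubmonoidClass.coe_finset_sum, Submodule.coe_smul, Finset.sum_apply, Pi.smul_apply, κ, hE] at h2
      simpa using h2
    have h2 := hκ.fintype_card_le_finrank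
    rw [← Nat.card_eq_fintype_card, Nat.card_coe_set_eq] at h2
    omega
  · have h1 := claimA _ hg hrad hspan
    let t := Fintype.linearCombination L (gv F v)
    have h2 := LinearMap.finrank_range_add_finrank_ker t
    rw [Fintype.range_linearCombination, Module.finrank_fin_fun] at h2
    let κ : Fin 3 → LinearMap.ker t := fun a => ⟨v a, gv_rel F v hFv a⟩
    have hκ : LinearIndependent L κ := LinearIndependent.of_comp (LinearMap.ker t).subtype hLI
    have h3 := hκ.fintype_card_le_finrank
    rw [Fintype.card_fin] at h3
    omega
end generic


section proj
variable {K : Type} [Field K] [IsAlgClosed K] {m : ℕ} (i : Fin m)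

/-- F as a polynomial in the i-th variable -/
noncomputable def toPoly : MvPolynomial (Fin m) K →ₐ[K] Polynomial (MvPolynomial {j : Fin m // j ≠ i} K) :=
  aeval (fun j => if h : j ≠ i then Polynomial.C (X ⟨j, h⟩) else Polynomial.X)

noncomputable def fromPoly : Polynomial (MvPolynomial {j : Fin m // j ≠ i} K) →+* MvPolynomial (Fin m) K :=
  Polynomial.eval₂RingHom (rename (R := K) (fun j : {j : Fin m // j ≠ i} => j.1)).toRingHom (X i)

lemma from_to (F : MvPolynomial (Fin m) K) : fromPoly i (toPoly i F) = F := by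
  have : (fromPoly i).comp (toPoly (K := K) i).toRingHom = RingHom.id _ := by
    apply MvPolynomial.ringHom_ext
    · intro r
      simp [fromPoly, toPoly, Polynomial.algebraMap_apply, MvPolynomial.algebraMap_eq]
    · intro j
      by_cases h : j = i
      · simp [fromPoly, toPoly, h]
      · simp [fromPoly, toPoly, h]
  exact DFunLike.congr_fun this F

lemma eval_toPoly (F : MvPolynomial (Fin m) K) (y : {j : Fin m // j ≠ i} → K) (t : K) :
    Polynomial.eval t ((toPoly i F).map (eval y)) =
      eval (fun j => if h : j ≠ i then y ⟨j, h⟩ else t) F := by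
  have : ((Polynomial.evalRingHom t).comp (Polynomial.mapRingHom (eval y))).comp
      (toPoly (K := K) i).toRingHom = eval (fun j => if h : j ≠ i then y ⟨j, h⟩ else t) := by
    apply MvPolynomial.ringHom_ext
    · intro r
      simp [toPoly, Polynomial.algebraMap_apply, MvPolynomial.algebraMap_eq]
    · intro j
      by_cases h : j = i
      · simp [toPoly, h]
      · simp [toPoly, h]
  exact DFunLike.congr_fun this F

lemma proj_dominant (F : MvPolynomial (Fin m) K) (hF : pderiv i F ≠ 0) (j0 : Fin m) (hj0 : j0 ≠ i)
    (H : MvPolynomial {j : Fin m // j ≠ i} K)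
    (hH : ∀ x : Fin m → K, x ≠ 0 → eval x F = 0 → eval (fun j : {j : Fin m // j ≠ i} => x j) H = 0) :
    H = 0 := by
  set p := toPoly i F with hp
  have hd : p.natDegree ≠ 0 := by
    intro h0
    obtain ⟨c, hc⟩ := Polynomial.natDegree_eq_zero.1 h0
    apply hF
    rw [← from_to i F, ← hp, ← hc]
    have : fromPoly i (Polynomial.C c) = rename (fun j : {j : Fin m // j ≠ i} => j.1) c := by
      simp [fromPoly]
    rw [this]
    apply pderiv_eq_zero_of_notMem_vars
    intro hmem
    have := vars_rename _ _ hmem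
    rw [Finset.mem_image] at this
    obtain ⟨a, _, ha⟩ := this
    exact a.2 ha
  have hp0 : p ≠ 0 := by rintro h; simp [h] at hd
  have hprod : p.leadingCoeff * H * X ⟨j0, hj0⟩ = 0 := by
    apply MvPolynomial.funext
    intro y
    simp only [map_mul, map_zero, eval_X]
    by_cases h1 : eval y p.leadingCoeff = 0
    · simp [h1]
    by_cases h2 : y ⟨j0, hj0⟩ = 0
    · simp [h2]
    have hdeg : (p.map (eval y)).degree ≠ 0 := by
      rw [Polynomial.degree_map_eq_of_leadingCoeff_ne_zero _ h1, Polynomial.degree_eq_natDegree hp0]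
      exact_mod_cast hd
    obtain ⟨t, ht⟩ := IsAlgClosed.exists_root _ hdeg
    rw [Polynomial.IsRoot, hp, eval_toPoly] at ht
    have h3 := hH _ (by
      intro h0
      apply h2
      have := congrFun h0 j0
      simpa [hj0] using this) ht
    have h4 : (fun j : {j : Fin m // j ≠ i} => (fun j => if h : j ≠ i then y ⟨j, h⟩ else t) j.1) = y := by
      ext j
      simp [j.2]
    rw [h4] at h3
    simp [h3]
  have h5 := (mul_eq_zero.1 hprod).resolve_right (X_ne_zero _)
  exact (mul_eq_zero.1 h5).resolve_left (Polynomial.leadingCoeff_ne_zero.2 hp0)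
end proj

lemma eval_smul_hom {m : ℕ} (F : MvPolynomial (Fin m) KK) (hF : F.IsHomogeneous 4) (c : KK) (x : Fin m → KK) :
    eval (c • x) F = c ^ 4 * eval x F := by
  rw [eval_eq, eval_eq, Finset.mul_sum]
  refine Finset.sum_congr rfl fun d hd => ?_
  have hdeg : d.degree = 4 := by
    rw [Finsupp.degree_eq_weight_one]
    exact hF (mem_support_iff.1 hd)
  have : ∏ i ∈ d.support, c ^ d i = c ^ 4 := by
    rw [Finset.prod_pow_eq_pow_sum, ← hdeg]; rfl
  simp only [Pi.smul_apply, smul_eq_mul, mul_pow, Finset.prod_mul_distrib, this]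
  ring

lemma plane_zero {n : ℕ} (F : MvPolynomial (Fin (n + 1)) KK) (hF : F.IsHomogeneous 4)
    (Λ : Submodule KK (Fin (n + 1) → KK)) (h : planeSet Λ ⊆ hyp F) (x) (hx : x ∈ Λ) : eval x F = 0 := by
  by_cases h0 : x = 0
  · have := eval_smul_hom F hF 0 0
    rw [h0]
    simpa using this
  · obtain ⟨c, hc⟩ := Projectivization.exists_smul_eq_mk_rep KK x h0
    have h1 : (Projectivization.mk KK x h0) ∈ planeSet Λ := by
      change Projectivization.rep _ ∈ Λ
      rw [← hc]
      exact Λ.smul_mem _ hx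
    have h2 : eval (Projectivization.rep (Projectivization.mk KK x h0)) F = 0 := h h1
    rw [← hc] at h2
    have h3 := eval_smul_hom F hF (c : KK) x
    change eval ((c : KK) • x) F = 0 at h2
    rw [h2] at h3
    exact (mul_eq_zero.1 h3.symm).resolve_left (pow_ne_zero _ c.ne_zero)

lemma point_plane {n : ℕ} (F : MvPolynomial (Fin (n + 1)) KK) (hF : F.IsHomogeneous 4)
    (Φ : Set (Submodule KK (Fin (n + 1) → KK))) (hcover : DSet Φ = hyp F) (x) (h0 : x ≠ 0)
    (hx : eval x F = 0) : ∃ Λ ∈ Φ, x ∈ Λ := by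
  obtain ⟨c, hc⟩ := Projectivization.exists_smul_eq_mk_rep KK x h0
  have h1 : Projectivization.mk KK x h0 ∈ hyp F := by
    change eval (Projectivization.rep _) F = 0
    rw [← hc]
    change eval ((c : KK) • x) F = 0
    rw [eval_smul_hom F hF, hx, mul_zero]
  rw [← hcover] at h1
  obtain ⟨Λ, hΛ, h2⟩ := h1
  refine ⟨Λ, hΛ, ?_⟩
  rw [← hc] at h2
  exact (Submodule.smul_mem_iff_of_isUnit Λ c.isUnit).1 h2

theorem chain_bound (n : ℕ) (hn : 6 ≤ n)
    (F : MvPolynomial (Fin (n + 1)) KK) (hF : F.IsHomogeneous 4)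
    (hns : NonsingularK F)
    (Φ : Set (Submodule KK (Fin (n + 1) → KK)))
    (hΦ : GrVariety 2 n Φ) (hsub : Φ ⊆ Fano 2 n (hyp F))
    (hcover : DSet Φ = hyp F)
    (p : LTSeries {W : Set (Submodule KK (Fin (n + 1) → KK)) // GrVariety 2 n W ∧ W ⊆ Φ}) :
    p.length + 16 ≤ 3 * n ∧ 7 ≤ n := by
  haveI hP := PZ_prime hΦ
  let A := MvPolynomial (Fin 3 × Fin (n + 1)) KK
  let P : Ideal A := PZ Φ
  haveI : P.IsPrime := hP
  let R := A ⧸ P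
  let L := FractionRing R
  haveI : Algebra.EssFiniteType R L := Algebra.EssFiniteType.of_isLocalization L (nonZeroDivisors R)
  haveI : Algebra.FiniteType KK R := inferInstance
  haveI : Algebra.EssFiniteType KK L := Algebra.EssFiniteType.comp KK R L
  let v : Fin 3 → Fin (n + 1) → L := fun a j => algebraMap R L (Ideal.Quotient.mk P (X (a, j)))
  let θ : A →ₐ[KK] L := (IsScalarTower.toAlgHom KK R L).comp (Ideal.Quotient.mkₐ KK P)
  have hθX : ∀ a j, θ (X (a, j)) = v a j := fun _ _ => rfl
  have hθ0 : ∀ f, θ f = 0 ↔ f ∈ P := by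
    intro f
    change algebraMap R L (Ideal.Quotient.mk P f) = 0 ↔ _
    rw [FaithfulSMul.algebraMap_eq_zero_iff, Ideal.Quotient.eq_zero_iff_mem]
  have hθa : ∀ {τ : Type} (y : τ → A) (H : MvPolynomial τ KK), θ (aeval y H) = aeval (fun t => θ (y t)) H := by
    intro τ y H
    rw [← AlgHom.comp_apply, comp_aeval]
  -- F vanishes on the generic plane
  have hFv : ∀ q : Fin 3 → KK, aeval (fun j => ∑ a, v a j * algebraMap KK L (q a)) F = 0 := by
    intro q
    have h1 : θ (aeval (fun j => ∑ a, (q a) • (X (a, j) : A)) F) = 0 := by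
      rw [hθ0]
      intro w hw hws
      have h2 : ev w (aeval (fun j => ∑ a, (q a) • (X (a, j) : A)) F) = eval (∑ a, q a • w a) F := by
        have : (aeval (R := KK) (fun p : Fin 3 × Fin (n + 1) => w p.1 p.2)).comp
            (aeval (fun j => ∑ a, (q a) • (X (a, j) : A))) = aeval (∑ a, q a • w a) := by
          ext j
          simp [A]
        have := DFunLike.congr_fun this F
        simpa [aeval_eq_eval] using this
      rw [h2]
      refine plane_zero F hF _ (hsub hws).2 _ ?_
      exact Submodule.sum_mem _ fun a _ => Submodule.smul_mem _ _ (Submodule.subset_span ⟨a, rfl⟩)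
    rw [hθa] at h1
    rw [← h1]
    congr 2
    ext j
    rw [map_sum]
    refine Finset.sum_congr rfl fun a _ => ?_
    rw [map_smul, hθX, Algebra.smul_def, mul_comm]
  -- minors
  obtain ⟨s, hs⟩ : ∃ s : Fin 3 → Fin (n + 1), Matrix.det (Matrix.of fun i j => v i (s j)) ≠ 0 := by
    obtain ⟨hc, ⟨Λ, hΛ⟩, -⟩ := hΦ
    obtain ⟨u, hu, hus⟩ := exists_frame Λ (hc.1 Λ hΛ)
    obtain ⟨s, hs⟩ := LI_minor u hu
    refine ⟨s, ?_⟩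
    have h1 : minorP s ∉ P := by
      intro h
      have := h u hu (hus ▸ hΛ)
      rw [ev_minorP] at this
      exact hs this
    rw [← hθ0, minorP, AlgHom.map_det] at h1
    exact h1
  -- the index i
  obtain ⟨i, hi⟩ : ∃ i, pderiv i F ≠ 0 := by
    by_contra! h
    have := hns (fun _ => 1) (fun i => by rw [h, map_zero])
    exact one_ne_zero (congrFun this 0)
  obtain ⟨j0, hj0⟩ : ∃ j0 : Fin (n + 1), j0 ≠ i := by
    haveI : Nontrivial (Fin (n + 1)) := Fin.nontrivial_iff_two_le.2 (by omega)
    exact exists_ne i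
  have hcov : AlgebraicIndependent KK (fun j : {j // j ≠ i} => v 2 j) := by
    rw [algebraicIndependent_iff]
    intro H hH
    refine proj_dominant i F hi j0 hj0 H ?_
    intro x hx0 hxF
    obtain ⟨Λ, hΛ, hxΛ⟩ := point_plane F hF Φ hcover x hx0 hxF
    obtain ⟨u, hu, hus⟩ := exists_frame Λ (hΦ.1.1 Λ hΛ)
    have h1 : (aeval (fun j : {j // j ≠ i} => (X (2, j.1) : A)) H) ∈ P := by
      rw [← hθ0, hθa]
      exact hH
    have h2 := tilde_zero u hu _ (fun w hw hws => h1 w hw (by rw [hws, hus]; exact hΛ))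
    rw [← hus] at hxΛ
    obtain ⟨c, hc⟩ := (Submodule.mem_span_range_iff_exists_fun KK).1 hxΛ
    have h3 := congrArg (eval (fun p => (Matrix.of fun _ b => c b : Matrix (Fin 3) (Fin 3) KK) p.1 p.2)) h2
    rw [eval_tilde, map_zero] at h3
    rw [← h3]
    have : (aeval (R := KK) (fun p : Fin 3 × Fin (n + 1) => act (Matrix.of fun _ b => c b) u p.1 p.2)).comp
        (aeval (fun j : {j // j ≠ i} => (X (2, j.1) : A))) = aeval (fun j : {j // j ≠ i} => x j) := by
      ext j
      rw [← hc]
      simp [A, act]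
    have := DFunLike.congr_fun this H
    simpa [aeval_eq_eval] using this.symm
  obtain ⟨T, hTc, hT⟩ := chain_ind p
  have hT' : AlgebraicIndependent KK (fun p : T => v p.1.1 p.1.2) := by
    have h1 := (indMod_iff _ _).1 hT
    exact AlgebraicIndependent.map' h1 (f := IsScalarTower.toAlgHom KK R L) (IsFractionRing.injective R L)
  have := main_bound F v hF hFv hns (minor_LI v s hs) s hs i hcov T hT'
  omega



end helpers

/-- **Lemma 11.** Let X ⊂ Pⁿ be a non-singular quartic hypersurface with n ≥ 6.
Then any geometrically integral component Φ ⊆ F₂(X) with X = D(Φ) satisfies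
dim Φ ≤ 3 if n = 6 and dim Φ ≤ 3n - 16 if n ≥ 7. -/
theorem statement15 (n : ℕ) (hn : 6 ≤ n)
    (F : MvPolynomial (Fin (n + 1)) KK) (hF : F.IsHomogeneous 4)
    (hns : NonsingularK F)
    (Φ : Set (Submodule KK (Fin (n + 1) → KK)))
    (hΦ : GrVariety 2 n Φ) (hsub : Φ ⊆ Fano 2 n (hyp F))
    (hcover : DSet Φ = hyp F) :
    (n = 6 → grDim 2 n Φ ≤ ((3 : ENat) : WithBot ENat)) ∧
    (7 ≤ n → grDim 2 n Φ ≤ (((3 * n - 16 : ℕ) : ENat) : WithBot ENat)) := by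
  have hb := chain_bound n hn F hF hns Φ hΦ hsub hcover
  constructor
  · intro h6
    refine iSup_le fun p => ?_
    have := hb p
    omega
  · intro h7
    refine iSup_le fun p => ?_
    have := hb p
    have h : p.length ≤ 3 * n - 16 := by omega
    exact_mod_cast h

end
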